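/- (Covariant Hamilton equations, gradient case.) Let X^i_α : ℝ^p × ℝ^n → ℝ be smooth. A smooth map x : ℝ^p → ℝ^n satisfies the second-order system h^{αβ} x^i_{αβ} = g^{ih} h^{αβ} g_{jk} X^j_β ∇_h X^k_α (all quantities depending on (t,x) evaluated at (t, x(t))) if and only if there exist smooth functions u^{αi} : ℝ^p → ℝ satisfying the covariant Hamilton PDEs system: u^{αi} = h^{αβ} x^i_β and ∂u^{αi}/∂t^α + H^α_{αλ} u^{λi} + G^i_{jk} u^{αj} ∂x^k/∂t^α = g^{ih} h^{αβ} g_{jk} X^j_β ∇_h X^k_α. -/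

import Mathlib

/-!
Only `u^{αi} = h^{αβ} x^i_β` can be a momentum, and it is smooth because `h⁻¹` is. So everything
reduces to a pointwise identity: the left side of the second Hamilton equation for this `u` is
`h^{αβ} x^i_{αβ}`. By the product rule the second derivatives of `x` match at once, and the
`G`-terms match by relabelling `α, β`. The remaining terms are linear in `x^i_β` and agree because
of the contracted form of `∇h⁻¹ = 0`,
`∂_α h^{αβ} + H^α_{αλ} h^{λβ} = -h^{αγ} H^β_{αγ}` (`divergence_minv`). That identity comes from
`∂_α h^{βγ} = -h^{βλ} (∂_α h_{λμ}) h^{μγ}` (`pd_minv`) and the symmetries of `h`, `h⁻¹` and `∂h`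
(`christoffel_contraction`).
-/

open scoped BigOperators

noncomputable section

/-- Partial derivative of `f : ℝ^m → ℝ` at `t` in the `α`-th coordinate direction. -/
def pd {m : ℕ} (α : Fin m) (f : (Fin m → ℝ) → ℝ) (t : Fin m → ℝ) : ℝ :=
  fderiv ℝ f t (Pi.single α 1)

/-- Componentwise inverse of a square array of reals (matrix inversion). -/
def minv {m : ℕ} (A : Fin m → Fin m → ℝ) : Fin m → Fin m → ℝ :=
  fun i j => (Matrix.of A)⁻¹ i j

/-- `√|det h(t)|`, the volume density of the metric `h`. -/
def sqrtDet {p : ℕ} (h : (Fin p → ℝ) → Fin p → Fin p → ℝ) (t : Fin p → ℝ) : ℝ :=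
  Real.sqrt |(Matrix.of (h t)).det|

/-- First jet `x^i_α = ∂x^i/∂t^α` of a map `x : ℝ^p → ℝ^n`. -/
def jet {p n : ℕ} (x : (Fin p → ℝ) → Fin n → ℝ) (t : Fin p → ℝ) :
    Fin n → Fin p → ℝ :=
  fun i α => pd α (fun s => x s i) t

/-- Christoffel symbols `G^i_{jk} = ½ g^{il}(∂g_{lj}/∂x^k + ∂g_{lk}/∂x^j − ∂g_{jk}/∂x^l)`. -/
def christoffel {m : ℕ} (g : (Fin m → ℝ) → Fin m → Fin m → ℝ)
    (i j k : Fin m) (q : Fin m → ℝ) : ℝ :=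
  (1 / 2) * ∑ l, minv (g q) i l *
    (pd k (fun y => g y l j) q + pd j (fun y => g y l k) q - pd l (fun y => g y j k) q)

/-- Covariant second jet
`x^i_{αβ} = ∂²x^i/∂t^α∂t^β − H^γ_{αβ} x^i_γ + G^i_{jk} x^j_α x^k_β`. -/
def covHess {p n : ℕ} (h : (Fin p → ℝ) → Fin p → Fin p → ℝ)
    (g : (Fin n → ℝ) → Fin n → Fin n → ℝ)
    (x : (Fin p → ℝ) → Fin n → ℝ) (i : Fin n) (α β : Fin p) (t : Fin p → ℝ) : ℝ :=
  pd α (fun s => jet x s i β) t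
    - (∑ γ, christoffel h γ α β t * jet x t i γ)
    + ∑ j, ∑ k, christoffel g i j k (x t) * jet x t j α * jet x t k β

/-- `∇_j X^i_α = ∂X^i_α/∂x^j + G^i_{jk} X^k_α`. -/
def nablaX {p n : ℕ} (g : (Fin n → ℝ) → Fin n → Fin n → ℝ)
    (X : Fin n → Fin p → (Fin p → ℝ) → (Fin n → ℝ) → ℝ)
    (j i : Fin n) (α : Fin p) (t : Fin p → ℝ) (q : Fin n → ℝ) : ℝ :=
  pd j (fun y => X i α t y) q + ∑ k, christoffel g i j k q * X k α t q

/-- `D_β X^i_α = ∂X^i_α/∂t^β − H^γ_{βα} X^i_γ`. -/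
def Dt {p n : ℕ} (h : (Fin p → ℝ) → Fin p → Fin p → ℝ)
    (X : Fin n → Fin p → (Fin p → ℝ) → (Fin n → ℝ) → ℝ)
    (β : Fin p) (i : Fin n) (α : Fin p) (t : Fin p → ℝ) (q : Fin n → ℝ) : ℝ :=
  pd β (fun s => X i α s q) t - ∑ γ, christoffel h γ β α t * X i γ t q

/-- External tensor `F_j{}^i{}_α = ∇_j X^i_α − g_{hj} g^{ik} ∇_k X^h_α`. -/
def Fext {p n : ℕ} (g : (Fin n → ℝ) → Fin n → Fin n → ℝ)
    (X : Fin n → Fin p → (Fin p → ℝ) → (Fin n → ℝ) → ℝ)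
    (j i : Fin n) (α : Fin p) (t : Fin p → ℝ) (q : Fin n → ℝ) : ℝ :=
  nablaX g X j i α t q
    - ∑ h', ∑ k, g q h' j * minv (g q) i k * nablaX g X k h' α t q

/-- Potential energy `f = ½ h^{αβ} g_{ij} X^i_α X^j_β`. -/
def potE {p n : ℕ} (h : (Fin p → ℝ) → Fin p → Fin p → ℝ)
    (g : (Fin n → ℝ) → Fin n → Fin n → ℝ)
    (X : Fin n → Fin p → (Fin p → ℝ) → (Fin n → ℝ) → ℝ)
    (t : Fin p → ℝ) (q : Fin n → ℝ) : ℝ :=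
  (1 / 2) * ∑ α, ∑ β, ∑ i, ∑ j, minv (h t) α β * g q i j * X i α t q * X j β t q

/-- A map `x` is an extremal of the first-order Lagrangian `L = L(t, x, x_·)` iff it
satisfies the Euler–Lagrange equations
`∂L/∂x^k − (d/dt^α)(∂L/∂x^k_α) = 0` along the first jet of `x`. -/
def IsExtremal {p n : ℕ}
    (L : (Fin p → ℝ) → (Fin n → ℝ) → (Fin n → Fin p → ℝ) → ℝ)
    (x : (Fin p → ℝ) → Fin n → ℝ) : Prop :=
  ∀ (t : Fin p → ℝ) (k : Fin n),
    fderiv ℝ (fun q => L t q (jet x t)) (x t) (Pi.single k 1)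
      - (∑ α, pd α
          (fun s => fderiv ℝ (fun v => L s (x s) v) (jet x s)
            (Pi.single k (Pi.single α 1))) t) = 0

theorem minv_symm {m : ℕ} {A : Fin m → Fin m → ℝ} (hA : ∀ i j, A i j = A j i) (i j : Fin m) :
    minv A i j = minv A j i := by
  have hT : (Matrix.of A).transpose = Matrix.of A := by
    ext a b
    exact hA b a
  have := congrFun (congrFun (Matrix.transpose_nonsing_inv (Matrix.of A)) j) i
  rw [hT] at this
  exact this

theorem sum_minv_mul {m : ℕ} {A : Fin m → Fin m → ℝ} (hA : (Matrix.of A).det ≠ 0)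
    (i j : Fin m) : ∑ k, minv A i k * A k j = if i = j then 1 else 0 := by
  have := congrFun (congrFun (Matrix.nonsing_inv_mul (Matrix.of A) (isUnit_iff_ne_zero.2 hA)) i) j
  rw [Matrix.mul_apply, Matrix.one_apply] at this
  exact this

theorem sum_mul_minv {m : ℕ} {A : Fin m → Fin m → ℝ} (hA : (Matrix.of A).det ≠ 0)
    (i j : Fin m) : ∑ k, A i k * minv A k j = if i = j then 1 else 0 := by
  have := congrFun (congrFun (Matrix.mul_nonsing_inv (Matrix.of A) (isUnit_iff_ne_zero.2 hA)) i) j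
  rw [Matrix.mul_apply, Matrix.one_apply] at this
  exact this

/-- The inverse of a smooth nondegenerate family is smooth, by Cramer's rule. -/
theorem contDiff_minv {m : ℕ} {h : (Fin m → ℝ) → Fin m → Fin m → ℝ}
    (hsmooth : ∀ α β, ContDiff ℝ (⊤ : ℕ∞) fun t => h t α β)
    (hdet : ∀ t, (Matrix.of (h t)).det ≠ 0) (a b : Fin m) :
    ContDiff ℝ (⊤ : ℕ∞) fun t => minv (h t) a b := by
  have det_smooth : ∀ B : (Fin m → ℝ) → Matrix (Fin m) (Fin m) ℝ,
      (∀ i j, ContDiff ℝ (⊤ : ℕ∞) fun t => B t i j) →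
      ContDiff ℝ (⊤ : ℕ∞) fun t => (B t).det := by
    intro B hB
    simp only [Matrix.det_apply']
    exact ContDiff.sum fun σ _ => contDiff_const.mul (contDiff_prod fun i _ => hB _ _)
  have hinv : (fun t => minv (h t) a b) = fun t =>
      ((Matrix.of (h t)).det)⁻¹ * ((Matrix.of (h t)).updateRow b (Pi.single a 1)).det := by
    funext t
    simp [minv, Matrix.inv_def, Matrix.adjugate_apply, Ring.inverse_eq_inv']
  rw [hinv]
  refine ((det_smooth _ fun i j => hsmooth i j).inv hdet).mul (det_smooth _ fun i j => ?_)
  by_cases hi : i = b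
  · subst hi
    simpa using contDiff_const
  · simpa [Matrix.updateRow_ne hi] using hsmooth i j

theorem contDiff_jet {p n : ℕ} {x : (Fin p → ℝ) → Fin n → ℝ} (hx : ContDiff ℝ (⊤ : ℕ∞) x)
    (i : Fin n) (β : Fin p) : ContDiff ℝ (⊤ : ℕ∞) fun s => jet x s i β := by
  have hxi : ContDiff ℝ (⊤ : ℕ∞) fun s => x s i := contDiff_pi.1 hx i
  exact (hxi.fderiv_right (m := (⊤ : ℕ∞)) (by simp)).clm_apply contDiff_const

theorem pd_sum_mul {m : ℕ} {ι : Type*} [Fintype ι] {f k : ι → (Fin m → ℝ) → ℝ}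
    (hf : ∀ b, ContDiff ℝ (⊤ : ℕ∞) (f b)) (hk : ∀ b, ContDiff ℝ (⊤ : ℕ∞) (k b))
    (α : Fin m) (t : Fin m → ℝ) :
    pd α (fun s => ∑ b, f b s * k b s) t
      = ∑ b, (pd α (f b) t * k b t + f b t * pd α (k b) t) := by
  have df : ∀ b, DifferentiableAt ℝ (f b) t := fun b => (hf b).differentiable (by simp) t
  have dk : ∀ b, DifferentiableAt ℝ (k b) t := fun b => (hk b).differentiable (by simp) t
  unfold pd
  rw [fderiv_fun_sum fun b _ => (df b).fun_mul (dk b)]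
  simp only [sum_apply]
  refine Finset.sum_congr rfl fun b _ => ?_
  rw [fderiv_fun_mul (df b) (dk b)]
  simp [mul_comm, add_comm]

/-- Derivative of the inverse: `∂_α h^{bc} = -h^{bl} (∂_α h_{lm}) h^{mc}`. -/
theorem pd_minv {m : ℕ} {h : (Fin m → ℝ) → Fin m → Fin m → ℝ}
    (hsmooth : ∀ α β, ContDiff ℝ (⊤ : ℕ∞) fun t => h t α β)
    (hdet : ∀ t, (Matrix.of (h t)).det ≠ 0) (α b c : Fin m) (t : Fin m → ℝ) :
    pd α (fun s => minv (h s) b c) t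
      = -∑ l, ∑ k, minv (h t) b l * pd α (fun s => h s l k) t * minv (h t) k c := by
  have hprod : ∀ k, ∑ l, (pd α (fun s => minv (h s) b l) t * h t l k
      + minv (h t) b l * pd α (fun s => h s l k) t) = 0 := by
    intro k
    rw [← pd_sum_mul (fun l => contDiff_minv hsmooth hdet b l) (fun l => hsmooth l k)]
    simp only [fun s => sum_minv_mul (hdet s) b k]
    simp [pd]
  have hsum : ∑ k, (∑ l, (pd α (fun s => minv (h s) b l) t * h t l k
      + minv (h t) b l * pd α (fun s => h s l k) t)) * minv (h t) k c = 0 := by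
    simp [hprod]
  -- Contracting `∂(h⁻¹ h) = 0` with `h⁻¹` isolates `∂h⁻¹`.
  have hiso : ∑ k, ∑ l, pd α (fun s => minv (h s) b l) t * h t l k * minv (h t) k c
      = pd α (fun s => minv (h s) b c) t := by
    rw [Finset.sum_comm]
    simp only [mul_assoc, ← Finset.mul_sum, sum_mul_minv (hdet t)]
    simp
  simp only [Finset.sum_add_distrib, add_mul, Finset.sum_mul] at hsum
  rw [hiso, Finset.sum_comm (f := fun k l =>
    minv (h t) b l * pd α (fun s => h s l k) t * minv (h t) k c)] at hsum
  linarith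

/-- The algebra behind `divergence_minv`, with `K` in the role of `h⁻¹` and `D a b c` in that of
`∂_a h_{bc}`. -/
theorem christoffel_contraction {m : ℕ} (K : Fin m → Fin m → ℝ) (D : Fin m → Fin m → Fin m → ℝ)
    (hK : ∀ a b, K a b = K b a) (hD : ∀ a b c, D a b c = D a c b) (b : Fin m) :
    (∑ a, -∑ l, ∑ k, K a l * D a l k * K k b)
      + ∑ a, ∑ l, ((1 / 2) * ∑ k, K a k * (D l k a + D a k l - D k a l)) * K l b
      = -∑ a, ∑ c, K a c * ((1 / 2) * ∑ l, K b l * (D c l a + D a l c - D l a c)) := by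
  have hC : ∑ a, ∑ l, ∑ k, K a k * D a k l * K l b
      = ∑ a, ∑ l, ∑ k, K a k * D k a l * K l b := by
    rw [Finset.sum_comm, Finset.sum_comm (f := fun a l => ∑ k, K a k * D k a l * K l b)]
    refine Finset.sum_congr rfl fun l _ => ?_
    rw [Finset.sum_comm]
    exact Finset.sum_congr rfl fun a _ => Finset.sum_congr rfl fun k _ => by rw [hK]
  have hE1 : ∑ a, ∑ c, ∑ l, K a c * (K b l * D c l a)
      = ∑ a, ∑ l, ∑ k, K a l * D a l k * K k b := by
    rw [Finset.sum_comm]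
    refine Finset.sum_congr rfl fun a _ => Finset.sum_congr rfl fun c _ =>
      Finset.sum_congr rfl fun l _ => ?_
    rw [hK c a, hK b l, hD a l c]
    ring
  have hE2 : ∑ a, ∑ c, ∑ l, K a c * (K b l * D a l c)
      = ∑ a, ∑ l, ∑ k, K a l * D a l k * K k b := by
    refine Finset.sum_congr rfl fun a _ => Finset.sum_congr rfl fun c _ =>
      Finset.sum_congr rfl fun l _ => ?_
    rw [hK b l, hD a l c]
    ring
  have hE3 : ∑ a, ∑ c, ∑ l, K a c * (K b l * D l a c)
      = ∑ a, ∑ l, ∑ k, K a k * D l k a * K l b := by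
    refine Finset.sum_congr rfl fun a _ => ?_
    rw [Finset.sum_comm]
    refine Finset.sum_congr rfl fun l _ => Finset.sum_congr rfl fun c _ => ?_
    rw [hK b l, hD l a c]
    ring
  have hleft : ∑ a, ∑ l, ((1 / 2) * ∑ k, K a k * (D l k a + D a k l - D k a l)) * K l b
      = (1 / 2) * (∑ a, ∑ l, ∑ k, K a k * D l k a * K l b
        + ∑ a, ∑ l, ∑ k, K a k * D a k l * K l b
        - ∑ a, ∑ l, ∑ k, K a k * D k a l * K l b) := by
    simp only [← Finset.sum_add_distrib, ← Finset.sum_sub_distrib, Finset.mul_sum, Finset.sum_mul]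
    exact Finset.sum_congr rfl fun a _ => Finset.sum_congr rfl fun l _ =>
      Finset.sum_congr rfl fun k _ => by ring
  have hright : ∑ a, ∑ c, K a c * ((1 / 2) * ∑ l, K b l * (D c l a + D a l c - D l a c))
      = (1 / 2) * (∑ a, ∑ c, ∑ l, K a c * (K b l * D c l a)
        + ∑ a, ∑ c, ∑ l, K a c * (K b l * D a l c)
        - ∑ a, ∑ c, ∑ l, K a c * (K b l * D l a c)) := by
    simp only [← Finset.sum_add_distrib, ← Finset.sum_sub_distrib, Finset.mul_sum]
    exact Finset.sum_congr rfl fun a _ => Finset.sum_congr rfl fun l _ =>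
      Finset.sum_congr rfl fun k _ => by ring
  rw [hleft, hright, hE1, hE2, hE3, hC, Finset.sum_neg_distrib]
  ring

/-- Contracted metric compatibility: `∂_a h^{ab} + H^a_{al} h^{lb} = -h^{ac} H^b_{ac}`. -/
theorem divergence_minv {m : ℕ} {h : (Fin m → ℝ) → Fin m → Fin m → ℝ}
    (hsymm : ∀ t α β, h t α β = h t β α)
    (hsmooth : ∀ α β, ContDiff ℝ (⊤ : ℕ∞) fun t => h t α β)
    (hdet : ∀ t, (Matrix.of (h t)).det ≠ 0) (b : Fin m) (t : Fin m → ℝ) :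
    (∑ a, pd a (fun s => minv (h s) a b) t)
      + ∑ a, ∑ l, christoffel h a a l t * minv (h t) l b
      = -∑ a, ∑ c, minv (h t) a c * christoffel h b a c t := by
  simp only [pd_minv hsmooth hdet, christoffel]
  exact christoffel_contraction (minv (h t)) (fun a b c => pd a (fun s => h s b c) t)
    (minv_symm (hsymm t)) (fun a b c => by simp only [hsymm _ b c]) b

/-- For the momenta `u^{αi} = h^{αβ} x^i_β`, the covariant divergence of `u` is the trace
`h^{αβ} x^i_{αβ}` of the covariant second jet. -/
theorem divergence_momentum {p n : ℕ} {h : (Fin p → ℝ) → Fin p → Fin p → ℝ}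
    (hsymm : ∀ t α β, h t α β = h t β α)
    (hsmooth : ∀ α β, ContDiff ℝ (⊤ : ℕ∞) fun t => h t α β)
    (hdet : ∀ t, (Matrix.of (h t)).det ≠ 0)
    (g : (Fin n → ℝ) → Fin n → Fin n → ℝ)
    {x : (Fin p → ℝ) → Fin n → ℝ} (hx : ContDiff ℝ (⊤ : ℕ∞) x)
    (t : Fin p → ℝ) (i : Fin n) :
    (∑ α, pd α (fun s => ∑ β, minv (h s) α β * jet x s i β) t)
        + (∑ α, ∑ l, christoffel h α α l t * ∑ β, minv (h t) l β * jet x t i β)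
        + (∑ α, ∑ j, ∑ k, christoffel g i j k (x t)
            * (∑ β, minv (h t) α β * jet x t j β) * jet x t k α)
      = ∑ α, ∑ β, minv (h t) α β * covHess h g x i α β t := by
  have hpd : ∀ α, pd α (fun s => ∑ β, minv (h s) α β * jet x s i β) t
      = ∑ β, pd α (fun s => minv (h s) α β) t * jet x t i β
        + ∑ β, minv (h t) α β * pd α (fun s => jet x s i β) t := by
    intro α
    rw [← Finset.sum_add_distrib]
    exact pd_sum_mul (fun β => contDiff_minv hsmooth hdet α β) (fun β => contDiff_jet hx i β) α t
  have hG : ∑ α, ∑ j, ∑ k, christoffel g i j k (x t)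
        * (∑ β, minv (h t) α β * jet x t j β) * jet x t k α
      = ∑ α, ∑ β, minv (h t) α β
        * ∑ j, ∑ k, christoffel g i j k (x t) * jet x t j α * jet x t k β := by
    rw [Finset.sum_comm (f := fun α β => minv (h t) α β
      * ∑ j, ∑ k, christoffel g i j k (x t) * jet x t j α * jet x t k β)]
    refine Finset.sum_congr rfl fun α _ => ?_
    simp only [Finset.mul_sum, Finset.sum_mul]
    conv_lhs => enter [2, j]; rw [Finset.sum_comm]
    rw [Finset.sum_comm]
    refine Finset.sum_congr rfl fun β _ => Finset.sum_congr rfl fun j _ =>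
      Finset.sum_congr rfl fun k _ => ?_
    rw [minv_symm (hsymm t) β α]
    ring
  -- The first-order terms, contracted from `divergence_minv`.
  have hH : ∑ α, ∑ β, pd α (fun s => minv (h s) α β) t * jet x t i β
        + ∑ α, ∑ l, christoffel h α α l t * ∑ β, minv (h t) l β * jet x t i β
      = -∑ α, ∑ β, minv (h t) α β * ∑ γ, christoffel h γ α β t * jet x t i γ := by
    have key : ∑ b, ((∑ a, pd a (fun s => minv (h s) a b) t)
          + ∑ a, ∑ l, christoffel h a a l t * minv (h t) l b) * jet x t i b
        = ∑ b, (-∑ a, ∑ c, minv (h t) a c * christoffel h b a c t) * jet x t i b :=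
      Finset.sum_congr rfl fun b _ => by rw [divergence_minv hsymm hsmooth hdet]
    simp only [add_mul, neg_mul, Finset.sum_add_distrib, Finset.sum_neg_distrib,
      Finset.sum_mul] at key
    have e1 : ∑ b, ∑ a, pd a (fun s => minv (h s) a b) t * jet x t i b
        = ∑ α, ∑ β, pd α (fun s => minv (h s) α β) t * jet x t i β := Finset.sum_comm
    have pull : ∀ F : Fin p → Fin p → Fin p → ℝ,
        ∑ b, ∑ a, ∑ l, F a l b = ∑ a, ∑ l, ∑ b, F a l b := by
      intro F
      rw [Finset.sum_comm]
      exact Finset.sum_congr rfl fun a _ => Finset.sum_comm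
    rw [e1, pull fun a l b => christoffel h a a l t * minv (h t) l b * jet x t i b,
      pull fun a c b => minv (h t) a c * christoffel h b a c t * jet x t i b] at key
    simpa only [Finset.mul_sum, mul_assoc] using key
  simp only [hpd, hG, covHess, mul_add, mul_sub, Finset.sum_add_distrib, Finset.sum_sub_distrib]
  linarith

/-- covariant Hamilton equations, gradient case. -/
theorem covariant_hamilton_gradient_case
    {p n : ℕ} (hp : 0 < p) (hn : 0 < n)
    (h : (Fin p → ℝ) → Fin p → Fin p → ℝ)
    (hsymm : ∀ t α β, h t α β = h t β α)
    (hsmooth : ∀ α β, ContDiff ℝ (⊤ : ℕ∞) fun t => h t α β)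
    (hdet : ∀ t, (Matrix.of (h t)).det ≠ 0)
    (g : (Fin n → ℝ) → Fin n → Fin n → ℝ)
    (gsymm : ∀ q i j, g q i j = g q j i)
    (gsmooth : ∀ i j, ContDiff ℝ (⊤ : ℕ∞) fun q => g q i j)
    (gdet : ∀ q, (Matrix.of (g q)).det ≠ 0)
    (X : Fin n → Fin p → (Fin p → ℝ) → (Fin n → ℝ) → ℝ)
    (Xsmooth : ∀ i α, ContDiff ℝ (⊤ : ℕ∞) fun z : (Fin p → ℝ) × (Fin n → ℝ) => X i α z.1 z.2)
    (x : (Fin p → ℝ) → Fin n → ℝ) (hx : ContDiff ℝ (⊤ : ℕ∞) x) :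
    (∀ (t : Fin p → ℝ) (i : Fin n),
        ∑ α, ∑ β, minv (h t) α β * covHess h g x i α β t
          = ∑ h', ∑ α, ∑ β, ∑ j, ∑ k, minv (g (x t)) i h' * minv (h t) α β
              * g (x t) j k * X j β t (x t) * nablaX g X h' k α t (x t))
      ↔ ∃ u : Fin p → Fin n → (Fin p → ℝ) → ℝ,
          (∀ (α : Fin p) (i : Fin n), ContDiff ℝ (⊤ : ℕ∞) (u α i))
          ∧ (∀ (t : Fin p → ℝ) (α : Fin p) (i : Fin n),
              u α i t = ∑ β, minv (h t) α β * jet x t i β)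
          ∧ (∀ (t : Fin p → ℝ) (i : Fin n),
              (∑ α, pd α (u α i) t)
                + (∑ α, ∑ l, christoffel h α α l t * u l i t)
                + (∑ α, ∑ j, ∑ k, christoffel g i j k (x t) * u α j t * jet x t k α)
              = ∑ h', ∑ α, ∑ β, ∑ j, ∑ k, minv (g (x t)) i h' * minv (h t) α β
                  * g (x t) j k * X j β t (x t) * nablaX g X h' k α t (x t)) := by
  have hdiv := divergence_momentum hsymm hsmooth hdet g hx
  constructor
  · intro hsec
    refine ⟨fun α i t => ∑ β, minv (h t) α β * jet x t i β, fun α i => ?_, fun _ _ _ => rfl,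
      fun t i => (hdiv t i).trans (hsec t i)⟩
    exact ContDiff.sum fun β _ => (contDiff_minv hsmooth hdet α β).mul (contDiff_jet hx i β)
  · rintro ⟨u, -, hu, hham⟩ t i
    have hu' : u = fun α i t => ∑ β, minv (h t) α β * jet x t i β := by
      funext α i t
      exact hu t α i
    subst hu'
    exact (hdiv t i).symm.trans (hham t i)
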